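/- Let (g_n), n ∈ ℕ, be a sequence of elements of Thompson's group F such that the sequence of marked groups (F,(x₀,x₁,g_n)) is convergent in the space of marked groups, and let G be its limit group, marked by the images x̄₀, x̄₁, ḡ of the three free generators. Then for all nontrivial elements h, h′ ∈ F and every isomorphism ψ from the cyclic subgroup ⟨h⟩ onto the cyclic subgroup ⟨h′⟩ with ψ(h) = h′, there is no group isomorphism φ from G onto the HNN extension H = HNNExtension F ⟨h⟩ ⟨h′⟩ ψ (with stable letter t satisfying t h t⁻¹ = h′) such that φ(x̄₀) and φ(x̄₁) are the canonical images of x₀ and x₁ in H and φ(ḡ) = t. -/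

import Mathlib

/-!
In the HNN extension `t h t⁻¹ = h'`, so if it were the limit then `g n * h * (g n)⁻¹ = h'` for all
large `n`. Fix such an `n₀` and put `c = g n₀`; then `c⁻¹ * g n` lies in the centralizer of `h` for
all large `n`. The contradiction comes from an identity with coefficients (`exists_law`): for each
`h ≠ 1` in `F` there is `a` not commuting with `h` such that `f a f⁻¹` commutes with `a` for *every*
`f` centralizing `h`. Hence `[s a s⁻¹, a]` with `s = c⁻¹ t` would be trivial in the limit, while
Britton's lemma (`britton`) shows that it is nontrivial in the HNN extension, because
`a ∉ ⟨h⟩` and `c a c⁻¹ ∉ ⟨h'⟩`.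

The identity is seen in the action `rep` of `F` on the line by piecewise linear homeomorphisms whose
slopes are powers of `2`. Let `(-∞, p]` be the largest initial segment fixed by `h`; right of `p`,
`h` or `h⁻¹` is a dilation with factor `r > 1`. An element `f` centralizing `h` fixes `p`, and near
`p` it is a dilation by a power of `2`; conjugating by powers of `h` propagates this, and so for
`[u, v]` close to `p` with `v - p ≤ 2 (u - p)`, `f` fixes `[u, v]` pointwise or moves it off itself
(`trichotomy_of_commute`). Any nontrivial `a` supported in `[u, v]` works (`exists_supp`).

To transfer this to the presented group, the action must be faithful (`rep_injective`). The two
relators imply the infinite presentation `x_k⁻¹ x_n x_k = x_{n+1}`, `k < n`, so every element is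
`p q⁻¹` with `p`, `q` positive, and positive words with the same action are equal in `F`.
-/

/-- The commutator `[a, b] = a⁻¹ b⁻¹ a b`. -/
def commWord {G : Type*} [Group G] (a b : G) : G := a⁻¹ * b⁻¹ * a * b

/-- The two defining relators of Thompson's group `F`:
`[x₀x₁⁻¹, x₀⁻ⁱx₁x₀ⁱ]` for `i = 1, 2`. -/
def thompsonRels : Set (FreeGroup (Fin 2)) :=
  {r | ∃ i ∈ ({1, 2} : Set ℕ),
    r = commWord (FreeGroup.of 0 * (FreeGroup.of 1)⁻¹)
        ((FreeGroup.of 0)⁻¹ ^ i * FreeGroup.of 1 * FreeGroup.of 0 ^ i)}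

/-- Thompson's group `F`. -/
abbrev ThompsonF : Type := PresentedGroup thompsonRels

/-- The standard generator `x₀` of Thompson's group `F`. -/
def tx0 : ThompsonF := PresentedGroup.of 0

/-- The standard generator `x₁` of Thompson's group `F`. -/
def tx1 : ThompsonF := PresentedGroup.of 1


/-! ### The infinite presentation and positive words -/

/-- The relations `X_k⁻¹ X_n X_k = X_{n+1}` for `k < n` follow from the case `k = 0` together with
`(k, n) = (1, 2), (1, 3)`. -/
theorem relX_step {G : Type*} [Group G] (X : ℕ → G)
    (h0 : ∀ n, X (n + 2) = (X 0)⁻¹ * X (n + 1) * X 0)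
    (h2 : X 2 * X 1 = X 1 * X 3) (h3 : X 3 * X 1 = X 1 * X 4) :
    ∀ k n, k < n → X n * X k = X k * X (n + 1) := by
  -- conjugation by `X 0` raises both indices
  have up : ∀ k n, X (n + 1) * X (k + 1) = X (k + 1) * X (n + 2) →
      X (n + 2) * X (k + 2) = X (k + 2) * X (n + 3) := by
    intro k n h
    rw [h0 (n + 1), h0 n, h0 k]
    calc _ = (X 0)⁻¹ * (X (n + 1) * X (k + 1)) * X 0 := by group
      _ = _ := by rw [h, h0 n]; group
  have base : ∀ n, X (n + 2) * X 1 = X 1 * X (n + 3) ∧ X (n + 3) * X 1 = X 1 * X (n + 4) := by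
    intro n
    induction n with
    | zero => exact ⟨h2, h3⟩
    | succ n ih =>
      obtain ⟨i1, i2⟩ := ih
      refine ⟨i2, ?_⟩
      have j1 := up 0 (n + 1) i1
      have j2 := up 1 (n + 2) j1
      simp only [Nat.zero_add, Nat.add_assoc, Nat.reduceAdd] at j1 j2 i1 i2 ⊢
      -- `j1 : X (n+3) X 2 = X 2 X (n+4)`, `j2 : X (n+4) X 3 = X 3 X (n+5)`
      have e : X (n + 4) = (X 2)⁻¹ * X (n + 3) * X 2 := by rw [mul_assoc, j1]; group
      calc X (n + 4) * X 1 = (X 2)⁻¹ * X (n + 3) * (X 2 * X 1) := by rw [e]; group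
        _ = (X 2)⁻¹ * (X (n + 3) * X 1) * X 3 := by rw [h2]; group
        _ = (X 2)⁻¹ * X 1 * (X (n + 4) * X 3) := by rw [i2]; group
        _ = (X 2)⁻¹ * (X 1 * X 3) * X (n + 5) := by rw [j2]; group
        _ = X 1 * X (n + 5) := by rw [← h2]; group
  intro k
  induction k with
  | zero =>
    intro n hn
    obtain ⟨m, rfl⟩ : ∃ m, n = m + 1 := ⟨n - 1, by omega⟩
    rw [h0 m]; group
  | succ k ih =>
    intro n hn
    obtain ⟨m, rfl⟩ : ∃ m, n = m + 2 := ⟨n - 2, by omega⟩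
    cases k with
    | zero => exact (base m).1
    | succ k => exact up k m (ih (m + 1) (by omega))

/-- The generator `x_n` of the infinite presentation of `F`:
`x_{n+1} = x₀⁻ⁿ x₁ x₀ⁿ`. -/
def genX : ℕ → ThompsonF
  | 0 => tx0
  | n + 1 => tx0⁻¹ ^ n * tx1 * tx0 ^ n

theorem commWord_eq_one {G : Type*} [Group G] {a b : G} : commWord a b = 1 ↔ Commute a b := by
  unfold commWord
  rw [show a⁻¹ * b⁻¹ * a * b = (b * a)⁻¹ * (a * b) by group, inv_mul_eq_one]
  exact eq_comm

theorem genX_step (n : ℕ) : genX (n + 2) = (genX 0)⁻¹ * genX (n + 1) * genX 0 := by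
  simp only [genX]
  rw [pow_succ' tx0⁻¹, pow_succ]; group

theorem commute_gen (i : ℕ) (hi : i ∈ ({1, 2} : Set ℕ)) :
    Commute (tx0 * tx1⁻¹) (genX (i + 1)) := by
  rw [← commWord_eq_one]
  have := PresentedGroup.one_of_mem (rels := thompsonRels) ⟨i, hi, rfl⟩
  simpa [commWord, genX, tx0, tx1, PresentedGroup.of] using this

theorem genX_mul (k n : ℕ) (hkn : k < n) : genX n * genX k = genX k * genX (n + 1) := by
  have key : ∀ i ∈ ({1, 2} : Set ℕ), genX (i + 1) * genX 1 = genX 1 * genX (i + 2) := by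
    intro i hi
    have h := (commute_gen i hi).eq
    have e1 : genX 1 = tx1 := by simp [genX]
    rw [genX_step, e1, show genX 0 = tx0 from rfl]
    calc genX (i + 1) * tx1
        = tx1 * tx0⁻¹ * (tx0 * tx1⁻¹ * genX (i + 1)) * tx1 := by group
      _ = _ := by rw [h]; group
  exact relX_step genX genX_step (key 1 (by simp)) (key 2 (by simp)) k n hkn

/-- The positive element of `F` spelled by a list of indices. -/
def posWord (l : List ℕ) : ThompsonF := (l.map genX).prod

@[simp] theorem posWord_nil : posWord [] = 1 := rfl
@[simp] theorem posWord_cons (i : ℕ) (l : List ℕ) : posWord (i :: l) = genX i * posWord l := by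
  simp [posWord]

/-- A negative letter can be pushed to the right through a positive word. -/
theorem genX_inv_mul_posWord (l : List ℕ) : ∀ i, ∃ p q : List ℕ,
    (genX i)⁻¹ * posWord l = posWord p * (posWord q)⁻¹ := by
  induction l with
  | nil => exact fun i => ⟨[], [i], by simp⟩
  | cons k l ih =>
    intro i
    rcases lt_trichotomy i k with hik | rfl | hik
    · obtain ⟨p, q, h⟩ := ih i
      refine ⟨(k + 1) :: p, q, ?_⟩
      have e : (genX i)⁻¹ * genX k = genX (k + 1) * (genX i)⁻¹ := by
        rw [inv_mul_eq_iff_eq_mul, ← mul_assoc, ← genX_mul i k hik, mul_inv_cancel_right]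
      rw [posWord_cons, posWord_cons, mul_assoc, ← h, ← mul_assoc, e, mul_assoc]
    · exact ⟨l, [], by simp⟩
    · obtain ⟨p, q, h⟩ := ih (i + 1)
      refine ⟨k :: p, q, ?_⟩
      have e : (genX i)⁻¹ * genX k = genX k * (genX (i + 1))⁻¹ := by
        rw [inv_mul_eq_iff_eq_mul, ← mul_assoc, genX_mul k i hik, mul_inv_cancel_right]
      rw [posWord_cons, posWord_cons, mul_assoc, ← h, ← mul_assoc, e, mul_assoc]

/-- `F` is the group of right fractions of its positive monoid. -/
theorem exists_posWord_mul_inv (x : ThompsonF) : ∃ p q : List ℕ,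
    x = posWord p * (posWord q)⁻¹ := by
  have hx : x ∈ Subgroup.closure (Set.range (PresentedGroup.of (rels := thompsonRels))) := by
    rw [PresentedGroup.closure_range_of]; trivial
  have gen : ∀ i : Fin 2, ∃ j, (PresentedGroup.of i : ThompsonF) = genX j := by
    intro i
    fin_cases i
    · exact ⟨0, rfl⟩
    · exact ⟨1, by simp [genX, tx1]⟩
  have app : ∀ p q, posWord (p ++ q) = posWord p * posWord q := by simp [posWord]
  induction hx using Subgroup.closure_induction_left with
  | one => exact ⟨[], [], by simp⟩
  | mul_left x hx y hy ih =>
    obtain ⟨i, rfl⟩ := hx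
    obtain ⟨j, hj⟩ := gen i
    obtain ⟨p, q, rfl⟩ := ih
    exact ⟨j :: p, q, by rw [hj, posWord_cons, mul_assoc]⟩
  | inv_mul_cancel x hx y hy ih =>
    obtain ⟨i, rfl⟩ := hx
    obtain ⟨j, hj⟩ := gen i
    obtain ⟨p, q, rfl⟩ := ih
    obtain ⟨p', q', h'⟩ := genX_inv_mul_posWord p j
    exact ⟨p', q ++ q', by rw [hj, ← mul_assoc, h', app]; group⟩

/-- The smallest letter of a positive word can be brought to the front without changing the
length of the word. -/
theorem posWord_min_front (l : List ℕ) (hl : l ≠ []) : ∃ k l', l'.length + 1 = l.length ∧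
    posWord l = genX k * posWord l' ∧ ∀ j ∈ l', k ≤ j := by
  induction l with
  | nil => exact absurd rfl hl
  | cons j l ih =>
    rcases eq_or_ne l [] with rfl | hne
    · exact ⟨j, [], by simp⟩
    · obtain ⟨k, l', hlen, hw, hk⟩ := ih hne
      rcases le_or_gt j k with hjk | hjk
      · refine ⟨j, k :: l', by simp [hlen], by simp [hw], ?_⟩
        intro i hi
        rcases List.mem_cons.1 hi with rfl | hi
        · exact hjk
        · exact hjk.trans (hk i hi)
      · refine ⟨k, (j + 1) :: l', by simp [hlen], ?_, ?_⟩
        · rw [posWord_cons, posWord_cons, hw, ← mul_assoc, genX_mul k j hjk, mul_assoc]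
        · intro i hi
          rcases List.mem_cons.1 hi with rfl | hi
          · omega
          · exact hk i hi

/-! ### The faithful action on the line -/

/-- The homeomorphism of `ℝ` that is the identity on `(-∞, c]`, has slope `2` on `[c, c + 1]`,
and is the translation by `1` on `[c + 1, ∞)`. -/
noncomputable def bend (c : ℝ) : ℝ ≃o ℝ :=
  StrictMono.orderIsoOfRightInverse
    (fun x => if x ≤ c then x else if x ≤ c + 1 then 2 * x - c else x + 1)
    (by intro x y hxy; dsimp only; split_ifs <;> linarith)
    (fun y => if y ≤ c then y else if y ≤ c + 2 then (y + c) / 2 else y - 1)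
    (by intro y; dsimp only; split_ifs <;> linarith)

theorem bend_apply (c x : ℝ) :
    bend c x = if x ≤ c then x else if x ≤ c + 1 then 2 * x - c else x + 1 := rfl

theorem bend_symm_apply (c y : ℝ) :
    (bend c)⁻¹ y = if y ≤ c then y else if y ≤ c + 2 then (y + c) / 2 else y - 1 := rfl

theorem bend_mul (c d : ℝ) (h : c + 1 ≤ d) : bend c * bend d = bend (d + 1) * bend c := by
  ext x
  simp only [RelIso.mul_apply, bend_apply]
  split_ifs <;> linarith

theorem bend_conj (c d : ℝ) (h : c + 1 ≤ d) :
    bend c * (bend d)⁻¹ * (bend c)⁻¹ = (bend (d + 1))⁻¹ := by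
  rw [eq_inv_iff_mul_eq_one, show bend c * (bend d)⁻¹ * (bend c)⁻¹ * bend (d + 1)
    = bend c * (bend d)⁻¹ * (bend c)⁻¹ * (bend (d + 1) * bend c) * (bend c)⁻¹ by group,
    ← bend_mul c d h]
  group

theorem rep_rels : ∀ r ∈ thompsonRels,
    FreeGroup.lift (fun i : Fin 2 => (bend (i : ℕ))⁻¹) r = 1 := by
  rintro r ⟨i, hi, rfl⟩
  have c2 := bend_conj 0 1 (by norm_num)
  have c3 := bend_conj 0 2 (by norm_num)
  have key : ∀ d : ℝ, 2 ≤ d → Commute ((bend 0)⁻¹ * bend 1) (bend d)⁻¹ := by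
    intro d hd
    have e : bend 0 * (bend d)⁻¹ * (bend 0)⁻¹ = bend 1 * (bend d)⁻¹ * (bend 1)⁻¹ := by
      rw [bend_conj 0 d (by linarith), bend_conj 1 d (by linarith)]
    show (bend 0)⁻¹ * bend 1 * (bend d)⁻¹ = (bend d)⁻¹ * ((bend 0)⁻¹ * bend 1)
    calc _ = (bend 0)⁻¹ * (bend 1 * (bend d)⁻¹ * (bend 1)⁻¹) * bend 1 := by group
      _ = _ := by rw [← e]; group
  have hc : ∃ d : ℝ, 2 ≤ d ∧ bend 0 ^ i * (bend 1)⁻¹ * (bend 0)⁻¹ ^ i = (bend d)⁻¹ := by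
    rcases hi with rfl | rfl
    · refine ⟨1 + 1, by norm_num, ?_⟩
      simpa using c2
    · refine ⟨2 + 1, by norm_num, ?_⟩
      rw [← c3, show (2 : ℝ) = 1 + 1 by norm_num, ← c2, pow_two, pow_two]; group
  obtain ⟨d, hd, e⟩ := hc
  have := commWord_eq_one.2 (key d hd)
  rw [← e] at this
  simpa [commWord] using this

/-- The action of `F` on `ℝ` in which `x_n` acts as `(bend n)⁻¹`. -/
noncomputable def rep : ThompsonF →* (ℝ ≃o ℝ) := PresentedGroup.toGroup rep_rels

theorem rep_genX (n : ℕ) : rep (genX n) = (bend n)⁻¹ := by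
  have r0 : rep (genX 0) = (bend 0)⁻¹ := by
    simp [genX, rep, tx0]
  cases n with
  | zero => simpa using r0
  | succ n =>
    induction n with
    | zero => simp [genX, rep, tx1]
    | succ n ih =>
      rw [genX_step, map_mul, map_mul, map_inv, r0, ih, inv_inv, bend_conj 0 _ (by push_cast; linarith)]
      push_cast; rfl

theorem bend_inv_le (c x : ℝ) : (bend c)⁻¹ x ≤ x := by
  rw [bend_symm_apply]; split_ifs <;> linarith

theorem bend_inv_lt {c x : ℝ} (h : c < x) : (bend c)⁻¹ x < x := by
  rw [bend_symm_apply]; split_ifs <;> linarith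

theorem bend_inv_of_le {c x : ℝ} (h : x ≤ c) : (bend c)⁻¹ x = x := by
  rw [bend_symm_apply, if_pos h]

theorem rep_posWord_le (l : List ℕ) (x : ℝ) : rep (posWord l) x ≤ x := by
  induction l with
  | nil => simp
  | cons i l ih =>
    rw [posWord_cons, map_mul, RelIso.mul_apply, rep_genX]
    exact (bend_inv_le _ _).trans ih

theorem rep_posWord_fix (l : List ℕ) (x : ℝ) (h : ∀ j ∈ l, x ≤ (j : ℝ)) :
    rep (posWord l) x = x := by
  induction l with
  | nil => simp
  | cons i l ih =>
    rw [posWord_cons, map_mul, RelIso.mul_apply, rep_genX,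
      ih fun j hj => h j (List.mem_cons_of_mem _ hj)]
    exact bend_inv_of_le (h i List.mem_cons_self)

/-- Positive words move points weakly down, and a word whose smallest letter `k` stands in front
moves every point right of `k` strictly down. -/
theorem rep_lt_of_min_front (k : ℕ) (l : List ℕ) (h : ∀ j ∈ l, k ≤ j) {x : ℝ} (hx : (k : ℝ) < x) :
    rep (genX k * posWord l) x < x := by
  rw [map_mul, RelIso.mul_apply, rep_genX]
  have hk : rep (posWord l) k = k := rep_posWord_fix l k fun j hj => by exact_mod_cast h j hj
  have : (k : ℝ) < rep (posWord l) x := by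
    rw [← hk]; exact (rep (posWord l)).strictMono hx |>.trans_le' (by rw [hk])
  exact (bend_inv_lt this).trans_le (rep_posWord_le l x)

/-- Distinct positive elements act differently: with smallest letters in front, equal actions
force equal front letters, which cancel. -/
theorem posWord_eq_of_rep_eq (m : ℕ) : ∀ p q : List ℕ, p.length + q.length ≤ m →
    rep (posWord p) = rep (posWord q) → posWord p = posWord q := by
  induction m with
  | zero =>
    intro p q hm _
    rw [List.length_eq_zero_iff.1 (by omega : p.length = 0),
      List.length_eq_zero_iff.1 (by omega : q.length = 0)]
  | succ m ih =>
    intro p q hm hpq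
    by_cases hp : p = []
    · by_cases hq : q = []
      · rw [hp, hq]
      · obtain ⟨k, l, -, e, hl⟩ := posWord_min_front q hq
        have := rep_lt_of_min_front k l hl (lt_add_one (k : ℝ))
        rw [← e, ← hpq, hp] at this
        simp at this
    · obtain ⟨k, l, hlen, e, hl⟩ := posWord_min_front p hp
      have h1 := rep_lt_of_min_front k l hl (lt_add_one (k : ℝ))
      by_cases hq : q = []
      · rw [← e, hpq, hq] at h1
        simp at h1
      · obtain ⟨k', l', hlen', e', hl'⟩ := posWord_min_front q hq
        have h2 := rep_lt_of_min_front k' l' hl' (lt_add_one (k' : ℝ))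
        have fix : ∀ (a b : ℕ) (l : List ℕ), (∀ j ∈ l, b ≤ j) → a < b →
            rep (genX b * posWord l) (a + 1) = a + 1 := by
          intro a b l hl hab
          rw [← posWord_cons]
          apply rep_posWord_fix
          intro j hj
          have : a + 1 ≤ j := by
            rcases List.mem_cons.1 hj with rfl | hj
            · exact hab
            · exact hab.trans_le (hl j hj)
          exact_mod_cast this
        -- the smallest indices agree, as the word with the larger one fixes more
        rw [e, e'] at hpq
        rcases lt_trichotomy k k' with hk | rfl | hk
        · rw [hpq, fix k k' l' hl' hk] at h1
          exact absurd h1 (lt_irrefl _)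
        · rw [e, e', ih l l' (by omega) (by simpa using hpq)]
        · rw [← hpq, fix k' k l hl hk] at h2
          exact absurd h2 (lt_irrefl _)

theorem rep_injective : Function.Injective rep := by
  rw [injective_iff_map_eq_one]
  intro x hx
  obtain ⟨p, q, rfl⟩ := exists_posWord_mul_inv x
  rw [map_mul, map_inv, mul_inv_eq_one] at hx
  rw [posWord_eq_of_rep_eq _ p q le_rfl hx, mul_inv_cancel]

/-! ### Germs and centralizers -/

/-- The group of increasing homeomorphisms of `ℝ` that fix `(-∞, 0]` pointwise and are, to the
right of each point, affine on some nondegenerate interval with slope a power of `2`. -/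
def rightAffine : Subgroup (ℝ ≃o ℝ) where
  carrier := {σ | (∀ x ≤ 0, σ x = x) ∧ ∀ x, ∃ ε > 0, ∃ i : ℤ, ∀ y, x ≤ y → y ≤ x + ε →
    σ y = σ x + 2 ^ i * (y - x)}
  one_mem' := ⟨by simp, fun x => ⟨1, one_pos, 0, by simp⟩⟩
  mul_mem' := by
    rintro σ τ ⟨hσ, hσ'⟩ ⟨hτ, hτ'⟩
    refine ⟨fun x hx => by rw [RelIso.mul_apply, hτ x hx, hσ x hx], fun x => ?_⟩
    obtain ⟨ε, hε, i, h1⟩ := hτ' x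
    obtain ⟨δ, hδ, j, h2⟩ := hσ' (τ x)
    have hi : (0 : ℝ) < 2 ^ i := by positivity
    refine ⟨min ε (δ / 2 ^ i), by positivity, j + i, fun y hy hy' => ?_⟩
    have hε' : y ≤ x + ε := hy'.trans (by gcongr; exact min_le_left _ _)
    have hδ' : y - x ≤ δ / 2 ^ i := by linarith [min_le_right ε (δ / 2 ^ i)]
    rw [le_div_iff₀ hi] at hδ'
    have e := h1 y hy hε'
    rw [RelIso.mul_apply, RelIso.mul_apply, h2 (τ y) (τ.monotone hy) (by rw [e]; linarith), e,
      zpow_add₀ (two_ne_zero)]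
    ring
  inv_mem' := by
    rintro σ ⟨hσ, hσ'⟩
    refine ⟨fun x hx => ?_, fun x => ?_⟩
    · conv_lhs => rw [← hσ x hx]
      exact RelIso.inv_apply_self σ x
    · obtain ⟨ε, hε, i, h⟩ := hσ' (σ⁻¹ x)
      have hi : (0 : ℝ) < 2 ^ i := by positivity
      refine ⟨2 ^ i * ε, by positivity, -i, fun y hy hy' => ?_⟩
      have h0 : 0 ≤ 2 ^ (-i) * (y - x) := mul_nonneg (by positivity) (by linarith)
      have h1 : 2 ^ (-i) * (y - x) ≤ ε := by
        rw [zpow_neg, inv_mul_le_iff₀ hi]; linarith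
      have := h (σ⁻¹ x + 2 ^ (-i) * (y - x)) (by linarith) (by linarith)
      rw [RelIso.apply_inv_self, add_sub_cancel_left, ← mul_assoc, ← zpow_add₀ (two_ne_zero),
        add_neg_cancel, zpow_zero, one_mul, add_sub_cancel] at this
      conv_lhs => rw [← this]
      exact RelIso.inv_apply_self σ _

theorem bend_mem {c : ℝ} (hc : 0 ≤ c) : bend c ∈ rightAffine := by
  refine ⟨fun x hx => by rw [bend_apply, if_pos (hx.trans hc)], fun x => ?_⟩
  rcases lt_or_ge x c with h | h
  · refine ⟨c - x, by linarith, 0, fun y hy hy' => ?_⟩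
    rw [bend_apply, bend_apply, if_pos (by linarith), if_pos h.le]; simp
  rcases lt_or_ge x (c + 1) with h' | h'
  · refine ⟨c + 1 - x, by linarith, 1, fun y hy hy' => ?_⟩
    rw [bend_apply, bend_apply, zpow_one]
    split_ifs <;> linarith
  · refine ⟨1, one_pos, 0, fun y hy hy' => ?_⟩
    rw [bend_apply, bend_apply, zpow_zero]
    split_ifs <;> linarith

theorem rep_mem (x : ThompsonF) : rep x ∈ rightAffine := by
  have : ∀ x, x ∈ rightAffine.comap rep := by
    refine PresentedGroup.generated_by thompsonRels _ fun i => ?_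
    simp only [Subgroup.mem_comap, rep, PresentedGroup.toGroup.of]
    exact inv_mem (bend_mem (Nat.cast_nonneg _))
  exact this x

/-- `σ` fixes every point up to `p`, and just to the right of `p` it is the dilation with
centre `p` and factor `r > 1`. -/
def HasGerm (σ : ℝ ≃o ℝ) (p ε r : ℝ) : Prop :=
  0 < ε ∧ 1 < r ∧ (∀ y ≤ p, σ y = y) ∧ ∀ y, p ≤ y → y ≤ p + ε → σ y = p + r * (y - p)

/-- Take `p` to be the right end of the largest initial segment fixed by `σ`. The slope right
of `p` is not `1`, so it is larger than `1` for `σ` or for `σ⁻¹`. -/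
theorem exists_germ {σ : ℝ ≃o ℝ} (hσ : σ ∈ rightAffine) (h1 : σ ≠ 1) :
    ∃ p ε r, 0 ≤ p ∧ (HasGerm σ p ε r ∨ HasGerm σ⁻¹ p ε r) := by
  set S : Set ℝ := {x | ∀ y ≤ x, σ y = y} with hS
  have h0 : (0 : ℝ) ∈ S := hσ.1
  obtain ⟨z, hz⟩ : ∃ z, σ z ≠ z := by
    by_contra! h
    exact h1 (by ext x; exact h x)
  have hb : BddAbove S := ⟨z, fun x hx => by
    by_contra! hlt
    exact hz (hx z hlt.le)⟩
  set p := sSup S with hp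
  have hlt : ∀ y < p, σ y = y := by
    intro y hy
    obtain ⟨x, hx, hyx⟩ := exists_lt_of_lt_csSup ⟨0, h0⟩ hy
    exact hx y hyx.le
  have hpp : σ p = p := by
    rcases lt_trichotomy (σ p) p with h | h | h
    · exact σ.injective (hlt _ h)
    · exact h
    · have e : σ (σ⁻¹ ((p + σ p) / 2)) = (p + σ p) / 2 := RelIso.apply_inv_self _ _
      have : σ⁻¹ ((p + σ p) / 2) < p := by
        rw [← σ.lt_iff_lt, e]; linarith
      rw [hlt _ this] at e
      linarith
  have hle : ∀ y ≤ p, σ y = y := fun y hy => by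
    rcases hy.lt_or_eq with h | rfl
    · exact hlt y h
    · exact hpp
  have hmax : ∀ ε > 0, ∃ y, p ≤ y ∧ y ≤ p + ε ∧ σ y ≠ y := by
    intro ε hε
    by_contra! h
    have : p + ε ∈ S := fun y hy => by
      rcases le_total y p with h' | h'
      · exact hle y h'
      · exact h y h' hy
    linarith [le_csSup hb this]
  have germ : ∀ τ ∈ rightAffine, (∀ y ≤ p, τ y = y) → ∃ ε > 0, ∃ i : ℤ,
      ∀ y, p ≤ y → y ≤ p + ε → τ y = p + 2 ^ i * (y - p) := by
    intro τ hτ hf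
    obtain ⟨ε, hε, i, h⟩ := hτ.2 p
    rw [hf p le_rfl] at h
    exact ⟨ε, hε, i, h⟩
  obtain ⟨ε, hε, i, h⟩ := germ σ hσ hle
  have hle' : ∀ y ≤ p, σ⁻¹ y = y := fun y hy => by
    conv_lhs => rw [← hle y hy]
    exact RelIso.inv_apply_self _ _
  have hp0 : 0 ≤ p := le_csSup hb h0
  rcases lt_trichotomy i 0 with hi | rfl | hi
  · obtain ⟨δ, hδ, j, h'⟩ := germ σ⁻¹ (inv_mem hσ) hle'
    refine ⟨p, δ, 2 ^ j, hp0, Or.inr ⟨hδ, ?_, hle', h'⟩⟩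
    by_contra! hj
    -- at a small point `σ` decreases, hence `σ⁻¹` increases
    have hr : (2 : ℝ) ^ i < 1 := zpow_lt_one_of_neg₀ (by norm_num) hi
    have hm := lt_min hε hδ
    set y := p + min ε δ with hy
    have e1 := h y (by linarith) (by linarith [min_le_left ε δ])
    have e2 := h' y (by linarith) (by linarith [min_le_right ε δ])
    have l1 : σ y < y := by rw [e1]; nlinarith
    have l2 : σ⁻¹ y ≤ y := by rw [e2]; nlinarith
    have l3 := σ.monotone l2
    rw [RelIso.apply_inv_self] at l3
    linarith
  · obtain ⟨y, hy, hy', hne⟩ := hmax ε hε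
    exact absurd (by rw [h y hy hy']; simp) hne
  · exact ⟨p, ε, 2 ^ i, hp0, Or.inl ⟨hε, one_lt_zpow₀ (by norm_num) hi, hle, h⟩⟩

/-- `(-∞, p]` is the largest initial segment fixed by `σ`, so an element commuting with `σ`
cannot stretch it. -/
theorem le_of_commute {σ f : ℝ ≃o ℝ} {p ε r : ℝ} (hσ : HasGerm σ p ε r) (hf : Commute f σ) :
    f p ≤ p := by
  obtain ⟨hε, hr, hfix, hlin⟩ := hσ
  by_contra! hlt
  set y := p + min ε (f p - p) with hy
  have hm : 0 < min ε (f p - p) := lt_min hε (by linarith)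
  have hyp : y ≤ f p := by linarith [min_le_right ε (f p - p)]
  have h1 := hlin y (by linarith) (by linarith [min_le_left ε (f p - p)])
  have h2 : f⁻¹ y ≤ p := by rw [← f.le_iff_le, RelIso.apply_inv_self]; exact hyp
  have h3 : (f * σ) (f⁻¹ y) = (σ * f) (f⁻¹ y) := by rw [hf.eq]
  rw [RelIso.mul_apply, RelIso.mul_apply, hfix _ h2, RelIso.apply_inv_self, h1] at h3
  nlinarith

/-- Zooming in at `p` with powers of `σ` reduces the comparison of `f u`, `f v` with `u`, `v` to
the germ of `f` at `p`, which is a dilation whose factor is a power of `2`. -/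
theorem trichotomy_of_commute {σ f : ℝ ≃o ℝ} {p ε r u v : ℝ} (hσ : HasGerm σ p ε r)
    (hf : f ∈ rightAffine) (hc : Commute f σ) (hu : p < u) (huv : u < v) (hv : v ≤ p + ε)
    (hv2 : v - p ≤ 2 * (u - p)) :
    (∀ y, u ≤ y → y ≤ v → f y = y) ∨ v ≤ f u ∨ f v ≤ u := by
  have hp : f p = p := by
    refine le_antisymm (le_of_commute hσ hc) ?_
    have := f.monotone (le_of_commute hσ hc.inv_left)
    rwa [RelIso.apply_inv_self] at this
  obtain ⟨hε, hr, hfix, hlin⟩ := hσ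
  obtain ⟨δ, hδ, m, hm⟩ := hf.2 p
  rw [hp] at hm
  have hr0 : 0 < r := by linarith
  have zoom : ∀ N : ℕ, ∀ y, p ≤ y → y ≤ p + ε → (σ ^ N) (p + (y - p) / r ^ N) = y := by
    intro N
    induction N with
    | zero => intro y _ _; simp
    | succ N ih =>
      intro y hy hy'
      have hd : 0 ≤ (y - p) / r ^ (N + 1) := div_nonneg (by linarith) (by positivity)
      have hd' : (y - p) / r ^ (N + 1) ≤ y - p :=
        div_le_self (by linarith) (one_le_pow₀ hr.le)
      rw [pow_succ, RelIso.mul_apply, hlin _ (by linarith) (by linarith), add_sub_cancel_left,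
        pow_succ, ← div_div, mul_div_cancel₀ _ hr0.ne']
      exact ih y hy hy'
  obtain ⟨N, hN⟩ := pow_unbounded_of_one_lt (ε / δ) hr
  rw [div_lt_iff₀ hδ] at hN
  have hrN : 0 < r ^ N := by positivity
  have act : ∀ y, p ≤ y → y ≤ p + ε → f y = (σ ^ N) (p + 2 ^ m * ((y - p) / r ^ N)) := by
    intro y hy hy'
    have hd : 0 ≤ (y - p) / r ^ N := div_nonneg (by linarith) hrN.le
    have hd' : (y - p) / r ^ N ≤ δ := by rw [div_le_iff₀ hrN]; nlinarith
    have e : (f * σ ^ N) (p + (y - p) / r ^ N) = (σ ^ N * f) (p + (y - p) / r ^ N) := by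
      rw [(hc.pow_right N).eq]
    rwa [RelIso.mul_apply, RelIso.mul_apply, zoom N y hy hy',
      hm (p + (y - p) / r ^ N) (by linarith) (by linarith), add_sub_cancel_left] at e
  rcases lt_trichotomy m 0 with h | rfl | h
  · right; right
    have h2 : (2 : ℝ) ^ m ≤ 2⁻¹ := by
      rw [← zpow_neg_one]; exact zpow_le_zpow_right₀ (by norm_num) (by omega)
    rw [act v (by linarith) hv, ← zoom N u hu.le (by linarith)]
    apply (σ ^ N).monotone
    rw [← mul_div_assoc]
    gcongr
    nlinarith
  · left
    intro y hy hy'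
    rw [act y (by linarith) (by linarith), zpow_zero, one_mul, zoom N y (by linarith) (by linarith)]
  · right; left
    have h2 : (2 : ℝ) ≤ 2 ^ m := by
      conv_lhs => rw [← zpow_one (2 : ℝ)]
      exact zpow_le_zpow_right₀ (by norm_num) (by omega)
    rw [act u hu.le (by linarith), ← zoom N v (by linarith) hv]
    apply (σ ^ N).monotone
    rw [← mul_div_assoc]
    gcongr
    nlinarith

/-- `a` is supported in `[u, v]`. -/
def SuppIn (a : ℝ ≃o ℝ) (u v : ℝ) : Prop := (∀ x ≤ u, a x = x) ∧ ∀ x, v ≤ x → a x = x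

theorem SuppIn.conj {a : ℝ ≃o ℝ} {u v : ℝ} (h : SuppIn a u v) (f : ℝ ≃o ℝ) :
    SuppIn (f * a * f⁻¹) (f u) (f v) := by
  constructor
  · intro x hx
    rw [RelIso.mul_apply, RelIso.mul_apply, h.1, RelIso.apply_inv_self]
    rwa [← f.le_iff_le, RelIso.apply_inv_self]
  · intro x hx
    rw [RelIso.mul_apply, RelIso.mul_apply, h.2, RelIso.apply_inv_self]
    rwa [← f.le_iff_le, RelIso.apply_inv_self]

theorem commute_of_supp {a b : ℝ ≃o ℝ} {w : ℝ} (ha : ∀ x, w ≤ x → a x = x)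
    (hb : ∀ x ≤ w, b x = x) : Commute a b := by
  show a * b = b * a
  ext x
  rw [RelIso.mul_apply, RelIso.mul_apply]
  rcases le_total x w with h | h
  · rw [hb x h, hb]
    exact (a.monotone h).trans_eq (ha w le_rfl)
  · rw [ha x h, ha]
    exact (hb w le_rfl).symm.trans_le (b.monotone h)

theorem commute_of_fix {a f : ℝ ≃o ℝ} {u v : ℝ} (ha : SuppIn a u v)
    (hf : ∀ y, u ≤ y → y ≤ v → f y = y) : Commute f a := by
  show f * a = a * f
  ext x
  rw [RelIso.mul_apply, RelIso.mul_apply]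
  by_cases hx : u ≤ x ∧ x ≤ v
  · rw [hf x hx.1 hx.2, hf]
    · exact (ha.1 u le_rfl).symm.trans_le (a.monotone hx.1)
    · exact (a.monotone hx.2).trans_eq (ha.2 v le_rfl)
  · have out : ∀ y, ¬ (u ≤ y ∧ y ≤ v) → a y = y := by
      intro y hy
      by_cases h : u ≤ y
      · exact ha.2 y (by by_contra! h'; exact hy ⟨h, h'.le⟩)
      · exact ha.1 y (not_le.1 h).le
    rw [out x hx, out]
    intro h
    have : f x = x := f.injective (hf _ h.1 h.2)
    rw [this] at h
    exact hx h

/-! ### Elements of small support -/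

/-- Every nonnegative dyadic rational is in the `F`-orbit of a natural number: `bend ⌊d⌋` doubles
the fractional part of `d`, which lowers the exponent of the denominator. -/
theorem exists_orbit (n : ℕ) : ∀ m : ℕ, ∃ (g : ThompsonF) (k : ℕ), rep g k = m / 2 ^ n := by
  induction n with
  | zero => exact fun m => ⟨1, m, by simp⟩
  | succ n ih =>
    intro m
    set j := m / 2 ^ (n + 1) with hj
    have h1 : j * 2 ^ (n + 1) ≤ m := Nat.div_mul_le_self _ _
    have h2 : m < (j + 1) * 2 ^ (n + 1) := by
      rw [mul_comm]; exact Nat.lt_mul_div_succ m (by positivity)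
    have h3 : j * 2 ^ n ≤ m := h1.trans' (by gcongr <;> omega)
    obtain ⟨g, k, hg⟩ := ih (m - j * 2 ^ n)
    refine ⟨genX j * g, k, ?_⟩
    rw [map_mul, RelIso.mul_apply, hg, rep_genX]
    have e : bend j ((m : ℝ) / 2 ^ (n + 1)) = ((m - j * 2 ^ n : ℕ) : ℝ) / 2 ^ n := by
      have h1' : (j : ℝ) ≤ m / 2 ^ (n + 1) := by
        rw [le_div_iff₀ (by positivity)]; exact_mod_cast h1
      have h2' : (m : ℝ) / 2 ^ (n + 1) ≤ j + 1 := by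
        rw [div_le_iff₀ (by positivity)]; exact_mod_cast h2.le
      have e2 : ((m - j * 2 ^ n : ℕ) : ℝ) / 2 ^ n = 2 * ((m : ℝ) / 2 ^ (n + 1)) - j := by
        rw [Nat.cast_sub h3]; push_cast; field_simp; ring
      rw [e2, bend_apply]
      split_ifs <;> linarith
    rw [← e, RelIso.inv_apply_self]

/-- `F` has nontrivial elements supported in any prescribed interval of `[0, ∞)`: an element
supported in `[k, k + 2]` is conjugated by a power of `x_k`, which contracts towards `k`, and
then by an element carrying `k` into the interval. -/
theorem exists_supp {u v : ℝ} (hu : 0 ≤ u) (huv : u < v) :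
    ∃ a : ThompsonF, a ≠ 1 ∧ SuppIn (rep a) u v := by
  obtain ⟨n, hn⟩ := exists_pow_lt_of_lt_one (sub_pos.2 huv) (by norm_num : (1 / 2 : ℝ) < 1)
  have h2n : (0 : ℝ) < 2 ^ n := by positivity
  have hm1 := Nat.lt_floor_add_one (u * 2 ^ n)
  have hm2 := Nat.floor_le (by positivity : 0 ≤ u * 2 ^ n)
  obtain ⟨g, k, hg⟩ := exists_orbit n (⌊u * 2 ^ n⌋₊ + 1)
  have hd1 : u < rep g k := by
    rw [hg, lt_div_iff₀ h2n]; push_cast; exact hm1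
  have hd2 : rep g k < v := by
    rw [one_div, inv_pow] at hn
    have hn' : 1 < (v - u) * 2 ^ n := by
      rwa [← div_lt_iff₀ h2n, one_div]
    rw [hg, div_lt_iff₀ h2n]; push_cast; nlinarith
  have hk : (k : ℝ) < (rep g)⁻¹ v := by
    rw [← (rep g).lt_iff_lt, RelIso.apply_inv_self]; exact hd2
  obtain ⟨N, hN⟩ := exists_pow_lt_of_lt_one (half_pos (sub_pos.2 hk))
    (by norm_num : (1 / 2 : ℝ) < 1)
  -- `b` is supported in `[k, k + 2]`, which `x_k ^ N` shrinks to `[k, k + 2 / 2 ^ N]`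
  set b : ThompsonF := genX k * (genX (k + 1))⁻¹ with hb
  have hrb : rep b = (bend k)⁻¹ * bend (k + 1) := by
    rw [hb, map_mul, map_inv, rep_genX, rep_genX, inv_inv]; push_cast; rfl
  have sb : SuppIn (rep b) k (k + 2) := by
    rw [hrb]
    constructor
    · intro x hx
      rw [RelIso.mul_apply, bend_apply, if_pos (by linarith), bend_inv_of_le hx]
    · intro x hx
      rw [RelIso.mul_apply, bend_apply, bend_symm_apply]
      split_ifs <;> linarith
  have nb : b ≠ 1 := by
    intro h
    have e : rep b (k + 1) = k + 1 := by rw [h]; simp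
    rw [hrb, RelIso.mul_apply, bend_apply, if_pos le_rfl] at e
    exact (bend_inv_lt (by linarith)).ne e
  have contr : ∀ N : ℕ, (rep (genX k) ^ N) (k + 2) = k + 2 * (1 / 2) ^ N := by
    intro N
    induction N with
    | zero => simp
    | succ N ih =>
      have h0 : (0 : ℝ) < (1 / 2) ^ N := by positivity
      have h1 : (1 / 2 : ℝ) ^ N ≤ 1 := pow_le_one₀ (by norm_num) (by norm_num)
      rw [pow_succ', RelIso.mul_apply, ih, rep_genX, bend_symm_apply, if_neg (by linarith),
        if_pos (by linarith), pow_succ]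
      ring
  have fixk : ∀ N : ℕ, (rep (genX k) ^ N) k = k := by
    intro N
    induction N with
    | zero => simp
    | succ N ih => rw [pow_succ', RelIso.mul_apply, ih, rep_genX, bend_inv_of_le le_rfl]
  refine ⟨g * genX k ^ N * b * (g * genX k ^ N)⁻¹, ?_, ?_⟩
  · rwa [Ne, conj_eq_one_iff]
  · have s := sb.conj (rep (g * genX k ^ N))
    rw [← map_inv, ← map_mul, ← map_mul] at s
    refine ⟨fun x hx => s.1 x ?_, fun x hx => s.2 x ?_⟩
    · rw [map_mul, RelIso.mul_apply, map_pow, fixk]; linarith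
    · rw [map_mul, RelIso.mul_apply, map_pow, contr]
      refine le_trans ?_ hx
      rw [← RelIso.apply_inv_self (rep g) v]
      exact (rep g).monotone (by linarith)

/-! ### The law and its failure in the HNN extension -/

/-- The identity with coefficient `a` satisfied by the whole centralizer of `h`: the interval
supporting `a` is either fixed pointwise by `f` or moved off itself. -/
theorem exists_law (h : ThompsonF) (hh : h ≠ 1) : ∃ a : ThompsonF, ¬ Commute a h ∧
    ∀ f, Commute f h → Commute (f * a * f⁻¹) a := by
  have hne : rep h ≠ 1 := fun e => hh (rep_injective (by rw [e, map_one]))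
  obtain ⟨p, ε, r, hp, hg⟩ := exists_germ (rep_mem h) hne
  obtain ⟨σ, hσ, hcomm⟩ : ∃ σ, HasGerm σ p ε r ∧ ∀ f, Commute f h → Commute (rep f) σ := by
    rcases hg with hg | hg
    · exact ⟨_, hg, fun f hf => hf.map rep⟩
    · exact ⟨_, hg, fun f hf => (hf.map rep).inv_right⟩
  have hε := hσ.1
  have hu : p < p + ε / 2 := by linarith
  obtain ⟨a, ha, hs⟩ := exists_supp (u := p + ε / 2) (v := p + ε) (by linarith) (by linarith)
  have tri : ∀ f, Commute f h → _ := fun f hf =>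
    trichotomy_of_commute (u := p + ε / 2) (v := p + ε) hσ (rep_mem f) (hcomm f hf) hu
      (by linarith) le_rfl (by linarith)
  refine ⟨a, fun hc => ?_, fun f hf => ?_⟩
  · rcases tri a hc with h1 | h1 | h1
    · refine ha (rep_injective ?_)
      rw [map_one]
      ext x
      rcases le_total x (p + ε / 2) with hx | hx
      · exact hs.1 x hx
      rcases le_total x (p + ε) with hx' | hx'
      · exact h1 x hx hx'
      · exact hs.2 x hx'
    · rw [hs.1 _ le_rfl] at h1; linarith
    · rw [hs.2 _ le_rfl] at h1; linarith
  · suffices Commute (rep f * rep a * (rep f)⁻¹) (rep a) by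
      apply rep_injective
      simpa using this.eq
    have hs' := hs.conj (rep f)
    rcases tri f hf with h1 | h1 | h1
    · rw [(commute_of_fix hs h1).eq, mul_inv_cancel_right]
    · exact (commute_of_supp (w := p + ε) hs.2 fun x hx => hs'.1 x (hx.trans h1)).symm
    · exact commute_of_supp (w := p + ε / 2) (fun x hx => hs'.2 x (h1.trans hx)) hs.1

/-- Britton's lemma for the word `[s a s⁻¹, a]` with `s = c⁻¹ t`. -/
theorem britton {h h' a c : ThompsonF}
    (ψ : (Subgroup.zpowers h) ≃* (Subgroup.zpowers h'))
    (ha : a ∉ Subgroup.zpowers h) (hb : c * a * c⁻¹ ∉ Subgroup.zpowers h') :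
    ¬ Commute ((HNNExtension.of c⁻¹ * HNNExtension.t) * HNNExtension.of a *
        (HNNExtension.of c⁻¹ * HNNExtension.t)⁻¹ :
        HNNExtension ThompsonF (Subgroup.zpowers h) (Subgroup.zpowers h') ψ)
      (HNNExtension.of a) := by
  intro hcomm
  let w : HNNExtension.NormalWord.ReducedWord ThompsonF (Subgroup.zpowers h)
      (Subgroup.zpowers h') :=
    { head := c⁻¹
      toList := [(1, a), (-1, c * a * c⁻¹), (1, a⁻¹), (-1, c * a⁻¹)]
      chain := by
        simp only [List.isChain_cons_cons, List.isChain_singleton, and_true,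
          HNNExtension.toSubgroup_one, HNNExtension.toSubgroup_neg_one, inv_mem_iff]
        exact ⟨fun h => absurd h ha, fun h => absurd h hb, fun h => absurd h ha⟩ }
  have hw : w.prod ψ = 1 := by
    have e := hcomm.eq
    rw [← mul_inv_eq_one] at e
    rw [← e]
    simp [w, HNNExtension.NormalWord.ReducedWord.prod, mul_assoc]
  have := HNNExtension.ReducedWord.toList_eq_nil_of_mem_of_range ψ w (by rw [hw]; exact one_mem _)
  simp [w] at this

/-- No limit of a convergent sequence of markings `(F, (x₀, x₁, g_n))` of Thompson's group
`F` is an HNN extension of `F` over cyclic subgroups `⟨h⟩ → ⟨h′⟩`, `h ↦ h′`, compatibly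
with the marking (the stable letter corresponding to the limit of the `g_n`). -/
theorem stmt2 (g : ℕ → ThompsonF)
    (ev : ℕ → FreeGroup (Fin 3) →* ThompsonF)
    (hev : ∀ n, ev n = FreeGroup.lift
      (fun i : Fin 3 => if i = 0 then tx0 else if i = 1 then tx1 else g n))
    (hconv : ∀ w : FreeGroup (Fin 3),
      (∀ᶠ n in Filter.atTop, ev n w = 1) ∨ (∀ᶠ n in Filter.atTop, ev n w ≠ 1))
    (N : Subgroup (FreeGroup (Fin 3))) [hN : N.Normal]
    (hNdef : ∀ w, w ∈ N ↔ ∀ᶠ n in Filter.atTop, ev n w = 1)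
    (h h' : ThompsonF) (hh : h ≠ 1) (hh' : h' ≠ 1)
    (ψ : (Subgroup.zpowers h) ≃* (Subgroup.zpowers h'))
    (hψ : ψ ⟨h, Subgroup.mem_zpowers h⟩ = ⟨h', Subgroup.mem_zpowers h'⟩) :
    ¬ ∃ φ : (FreeGroup (Fin 3) ⧸ N) ≃*
        HNNExtension ThompsonF (Subgroup.zpowers h) (Subgroup.zpowers h') ψ,
      φ (QuotientGroup.mk (FreeGroup.of 0)) = HNNExtension.of tx0 ∧
      φ (QuotientGroup.mk (FreeGroup.of 1)) = HNNExtension.of tx1 ∧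
      φ (QuotientGroup.mk (FreeGroup.of 2)) = HNNExtension.t := by
  rintro ⟨φ, h0, h1, h2⟩
  -- a free word in the first two letters for each element of `F`
  have lift : ∀ x : ThompsonF, ∃ W : FreeGroup (Fin 3), (∀ n, ev n W = x) ∧
      φ (QuotientGroup.mk W) = HNNExtension.of x := by
    intro x
    obtain ⟨w, rfl⟩ := PresentedGroup.mk_surjective thompsonRels x
    refine ⟨FreeGroup.map Fin.castSucc w, fun n => ?_, ?_⟩
    · have : (ev n).comp (FreeGroup.map Fin.castSucc) = PresentedGroup.mk thompsonRels := by
        ext i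
        fin_cases i <;> simp [hev, tx0, tx1, PresentedGroup.of]
      exact DFunLike.congr_fun this w
    · have : (φ.toMonoidHom.comp (QuotientGroup.mk' N)).comp (FreeGroup.map Fin.castSucc) =
          HNNExtension.of.comp (PresentedGroup.mk thompsonRels) := by
        ext i
        fin_cases i
        · simpa [tx0, PresentedGroup.of] using h0
        · simpa [tx1, PresentedGroup.of] using h1
      exact DFunLike.congr_fun this w
  have ev2 : ∀ n, ev n (FreeGroup.of 2) = g n := fun n => by simp [hev]
  have triv : ∀ W : FreeGroup (Fin 3), φ (QuotientGroup.mk W) = 1 ↔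
      ∀ᶠ n in Filter.atTop, ev n W = 1 := by
    intro W
    rw [← hNdef, ← QuotientGroup.eq_one_iff, map_eq_one_iff φ φ.injective]
  obtain ⟨Wh, eh, fh⟩ := lift h
  obtain ⟨Wh', eh', fh'⟩ := lift h'
  have conj : ∀ᶠ n in Filter.atTop, g n * h * (g n)⁻¹ = h' := by
    have := (triv (FreeGroup.of 2 * Wh * (FreeGroup.of 2)⁻¹ * Wh'⁻¹)).1 (by
      have e := HNNExtension.equiv_eq_conj (φ := ψ) ⟨h, Subgroup.mem_zpowers h⟩
      rw [hψ] at e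
      simp only [QuotientGroup.mk_mul, QuotientGroup.mk_inv, map_mul, map_inv, fh, fh', h2]
      rw [mul_inv_eq_one]
      exact e.symm)
    filter_upwards [this] with n hn
    simpa [eh, eh', ev2, mul_inv_eq_one] using hn
  -- `(g n₀)⁻¹ * g n` now centralizes `h` for all large `n`
  obtain ⟨n₀, hc⟩ := conj.exists
  obtain ⟨a, ha, law⟩ := exists_law h hh
  obtain ⟨Wa, ea, fa⟩ := lift a
  obtain ⟨Wc, ec, fc⟩ := lift (g n₀)⁻¹
  have ha' : a ∉ Subgroup.zpowers h := by
    rintro ⟨k, rfl⟩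
    exact ha ((Commute.refl h).zpow_left k)
  have hb' : g n₀ * a * (g n₀)⁻¹ ∉ Subgroup.zpowers h' := by
    rintro ⟨k, hk⟩
    refine ha' ⟨k, ?_⟩
    dsimp only at hk ⊢
    rw [← hc, conj_zpow] at hk
    simpa using hk
  refine britton ψ ha' hb' ?_
  rw [← commWord_eq_one]
  have key := (triv (commWord ((Wc * FreeGroup.of 2) * Wa * (Wc * FreeGroup.of 2)⁻¹) Wa)).2 (by
    filter_upwards [conj] with n hn
    have := commWord_eq_one.2 (law ((g n₀)⁻¹ * g n) (by
      show (g n₀)⁻¹ * g n * h = h * ((g n₀)⁻¹ * g n)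
      have e : g n * h = h' * g n := by rw [← hn]; group
      rw [mul_assoc, e, ← hc]; group))
    simpa only [commWord, map_mul, map_inv, ev2, ea, ec] using this)
  simpa only [commWord, QuotientGroup.mk_mul, QuotientGroup.mk_inv, map_mul, map_inv, fa, fc, h2]
    using key
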